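/- Let T > 0, let q : [0, T) → ℝ be continuous, and let x : [0, T) → ℝ be twice differentiable with x(t) > 0 and x″(t) + q(t)·x(t) ≤ 0 for all t ∈ [0, T). Then there do not exist k > 1/4 and t₁ ∈ [0, T) such that q(t) ≥ k/(T − t)² for all t ∈ [t₁, T). -/

import Mathlib

/-- Curvature growth bound along maximal incomplete geodesics: if the Jacobi
inequality `x'' + q·x ≤ 0` admits a positive twice-differentiable solution on
`[0, T)`, then the tidal curvature `q` cannot satisfy `q t ≥ k/(T - t)²` near
`T` for any `k > 1/4`. -/
theorem tidal_curvature_growth_bound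
    (T : ℝ) (hT : 0 < T) (q x : ℝ → ℝ)
    (hq : ContinuousOn q (Set.Ico 0 T))
    (hx : ∀ t : ℝ, 0 ≤ t → t < T → DifferentiableAt ℝ x t)
    (hx2 : ∀ t : ℝ, 0 ≤ t → t < T → DifferentiableAt ℝ (deriv x) t)
    (hxpos : ∀ t : ℝ, 0 ≤ t → t < T → 0 < x t)
    (hjac : ∀ t : ℝ, 0 ≤ t → t < T → deriv (deriv x) t + q t * x t ≤ 0) :
    ¬ ∃ k : ℝ, 1 / 4 < k ∧ ∃ t₁ : ℝ, 0 ≤ t₁ ∧ t₁ < T ∧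
      ∀ t : ℝ, t₁ ≤ t → t < T → k / (T - t) ^ 2 ≤ q t := by
  rintro ⟨k, hk, t₁, ht0, htT, hqk⟩
  obtain ⟨ω, hω, hωk⟩ : ∃ ω : ℝ, 0 < ω ∧ ω ^ 2 = k - 1 / 4 :=
    ⟨Real.sqrt (k - 1 / 4), Real.sqrt_pos.mpr (by linarith), Real.sq_sqrt (by linarith)⟩
  set w : ℝ → ℝ := fun t => (T - t) * deriv x t / x t with hw
  set φ : ℝ → ℝ := fun t => Real.arctan ((w t + 1 / 2) / ω) - ω * Real.log (T - t) with hφ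
  have key : ∀ t : ℝ, t₁ ≤ t → t < T → ∃ d : ℝ, HasDerivAt φ d t ∧ d ≤ 0 := by
    intro t h1 h2
    have h0 : 0 ≤ t := ht0.trans h1
    have hp := hxpos t h0 h2
    have hTt : 0 < T - t := by linarith
    have hs : HasDerivAt (fun t : ℝ => T - t) (-1) t := by
      simpa using (hasDerivAt_id t).const_sub T
    have hw' := (hs.mul (hx2 t h0 h2).hasDerivAt).div (hx t h0 h2).hasDerivAt hp.ne'
    have hφ' := ((hw'.add_const (1 / 2)).div_const ω).arctan.sub
      ((hs.log hTt.ne').const_mul ω)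
    refine ⟨_, hφ', ?_⟩
    simp only [Pi.mul_apply, Pi.div_apply]
    have hj := hjac t h0 h2
    have hq1 := hqk t h1 h2
    generalize deriv (deriv x) t = a at *
    generalize hb : deriv x t = b at *
    generalize hX : x t = X at *
    generalize hS : T - t = S at *
    have ha : a ≤ -(k / S ^ 2 * X) := by
      have := mul_le_mul_of_nonneg_right hq1 hp.le
      linarith
    set W := S * b / X with hWdef
    have hbW : b = W * X / S := by rw [hWdef]; field_simp
    have hD : ((-1 * b + S * a) * X - S * b * b) / X ^ 2 ≤ -(W ^ 2 + W + k) / S := by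
      have h3 : ((-1 * b + S * a) * X - S * b * b) / X ^ 2
          = (-(W ^ 2 + W)) / S + S * a / X := by
        rw [hbW]; field_simp; ring
      have h4 : S * a / X ≤ -k / S := by
        rw [div_le_div_iff₀ hp hTt]
        have := mul_le_mul_of_nonneg_left ha (sq_nonneg S)
        have h5 : S ^ 2 * -(k / S ^ 2 * X) = -k * X := by field_simp
        nlinarith
      rw [h3]
      have : -(W ^ 2 + W + k) / S = (-(W ^ 2 + W)) / S + -k / S := by ring
      linarith
    have hc : 0 < 1 / (1 + ((W + 1 / 2) / ω) ^ 2) := by positivity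
    have h6 : 1 / (1 + ((W + 1 / 2) / ω) ^ 2) *
        ((((-1 * b + S * a) * X - S * b * b) / X ^ 2) / ω) ≤
        1 / (1 + ((W + 1 / 2) / ω) ^ 2) * ((-(W ^ 2 + W + k) / S) / ω) := by
      gcongr
    have h7 : 1 / (1 + ((W + 1 / 2) / ω) ^ 2) * ((-(W ^ 2 + W + k) / S) / ω) = -ω / S := by
      have hk' : W ^ 2 + W + k = ω ^ 2 * (1 + ((W + 1 / 2) / ω) ^ 2) := by
        field_simp
        linarith
      rw [hk']
      have : 1 + ((W + 1 / 2) / ω) ^ 2 ≠ 0 := by positivity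
      generalize 1 + ((W + 1 / 2) / ω) ^ 2 = Z at *
      field_simp
    have h8 : ω * (-1 / S) = -ω / S := by ring
    linarith
  have hE : Real.exp (-(4 / ω)) < 1 := by
    rw [Real.exp_lt_one_iff]
    have : 0 < 4 / ω := by positivity
    linarith
  have hEp := Real.exp_pos (-(4 / ω))
  have hS1 : 0 < T - t₁ := by linarith
  obtain ⟨t₂, ht₂⟩ : ∃ t₂, t₂ = T - (T - t₁) * Real.exp (-(4 / ω)) := ⟨_, rfl⟩
  have h12 : t₁ ≤ t₂ := by nlinarith
  have h2T : t₂ < T := by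
    have := mul_pos hS1 hEp
    linarith
  have hanti : AntitoneOn φ (Set.Icc t₁ t₂) := by
    apply antitoneOn_of_deriv_nonpos (convex_Icc _ _)
    · intro t ht
      obtain ⟨d, hd, -⟩ := key t ht.1 (ht.2.trans_lt h2T)
      exact hd.continuousAt.continuousWithinAt
    · intro t ht
      rw [interior_Icc] at ht
      obtain ⟨d, hd, -⟩ := key t ht.1.le (ht.2.trans h2T)
      exact hd.differentiableAt.differentiableWithinAt
    · intro t ht
      rw [interior_Icc] at ht
      obtain ⟨d, hd, hd0⟩ := key t ht.1.le (ht.2.trans h2T)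
      rw [hd.deriv]; exact hd0
  have hfin := hanti (Set.left_mem_Icc.mpr h12) (Set.right_mem_Icc.mpr h12) h12
  have hlog : Real.log (T - t₂) = Real.log (T - t₁) - 4 / ω := by
    rw [ht₂, sub_sub_cancel, Real.log_mul hS1.ne' hEp.ne', Real.log_exp]; ring
  simp only [hφ] at hfin
  rw [hlog, mul_sub, mul_div_cancel₀ _ hω.ne'] at hfin
  have e1 := Real.arctan_lt_pi_div_two ((w t₁ + 1 / 2) / ω)
  have e2 := Real.neg_pi_div_two_lt_arctan ((w t₂ + 1 / 2) / ω)
  have e3 := Real.pi_lt_four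
  linarith
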